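/- arXiv:1301.5799 — 2 statements merged into one kernel-verified Lean document; each statement's English description precedes it below -/
import Mathlib

section
/- Let K be a compact Hausdorff space and let D ⊂ K be induced by an r-skeleton in K. Then G ∩ D is dense in G whenever G ⊂ K is a Gδ set (a countable intersection of open sets). In particular, if x ∈ K is a Gδ point (i.e., {x} is a Gδ set), then x ∈ D. -/
/-!
A directed order in which strictly increasing sequences are bounded above is countably directed, so
countably many properties that each hold eventually along a skeleton hold eventually at once. Since
`r s x` converges to `x`, it is eventually in every open set around `x`, and hence in every Gδ set
`G` containing `x`. Thus `x` is a limit of points `r s x` of `G ∩ D`.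
-/

open Filter Topology TopologicalSpace Set

universe u v

/-- A retractional skeleton in a topological space `K`: a family `r s : C(K, K)` of continuous
retractions indexed by an up-directed (nonempty) partially ordered set `Γ` such that
(i) each `r s` has metrizable range and the net `(r s x)` converges to `x`;
(ii) `s ≤ t` implies `r s ∘ r t = r t ∘ r s = r s`;
(iii) each strictly increasing sequence has a supremum `t` and `r t x = lim_n r (f n) x`. -/
structure RetractionalSkeleton (K : Type u) [TopologicalSpace K] : Type (u + 1) where
  Γ : Type u
  [po : PartialOrder Γ]
  [ne : Nonempty Γ]
  directed : ∀ s t : Γ, ∃ w, s ≤ w ∧ t ≤ w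
  r : Γ → C(K, K)
  isRetraction : ∀ s, ∀ x : K, r s (r s x) = r s x
  metrizable : ∀ s, MetrizableSpace ↥(Set.range (r s))
  tendsto_id : ∀ x : K, Tendsto (fun s => r s x) atTop (𝓝 x)
  comp_eq_of_le : ∀ s t : Γ, s ≤ t → ∀ x : K, r s (r t x) = r s x ∧ r t (r s x) = r s x
  sup_seq : ∀ f : ℕ → Γ, StrictMono f → ∃ t : Γ, IsLUB (Set.range f) t ∧
    ∀ x : K, Tendsto (fun n => r (f n) x) atTop (𝓝 (r t x))

/-- The set `D(𝔰) = ⋃ s, r s [K]` induced by a retractional skeleton. -/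
def RetractionalSkeleton.inducedSet {K : Type u} [TopologicalSpace K]
    (𝔰 : RetractionalSkeleton K) : Set K := ⋃ s, Set.range (𝔰.r s)

/-- `D` is induced by an r-skeleton in `K`. -/
def IsInducedByRSkeleton {K : Type u} [TopologicalSpace K] (D : Set K) : Prop :=
  ∃ 𝔰 : RetractionalSkeleton K, 𝔰.inducedSet = D

/-- `K` has a retractional skeleton. -/
def HasRetractionalSkeleton (K : Type u) [TopologicalSpace K] : Prop :=
  Nonempty (RetractionalSkeleton K)

section CountablyDirected

variable {α : Type*} [Preorder α] [IsDirectedOrder α]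

theorem exists_strictMono_forall_le [NoMaxOrder α] (s : ℕ → α) :
    ∃ f : ℕ → α, StrictMono f ∧ ∀ n, s n ≤ f n := by
  have exists_gt_ge (a b : α) : ∃ c, a < c ∧ b ≤ c := by
    obtain ⟨a', haa'⟩ := exists_gt a
    obtain ⟨c, ha'c, hbc⟩ := exists_ge_ge a' b
    exact ⟨c, haa'.trans_le ha'c, hbc⟩
  choose next lt_next le_next using exists_gt_ge
  let f : ℕ → α := Nat.rec (s 0) fun n a => next a (s (n + 1))
  refine ⟨f, strictMono_nat_of_lt_succ fun n => lt_next (f n) (s (n + 1)), fun n => ?_⟩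
  cases n with
  | zero => exact le_rfl
  | succ n => exact le_next (f n) (s (n + 1))

theorem bddAbove_range_of_forall_strictMono
    (h : ∀ f : ℕ → α, StrictMono f → BddAbove (range f)) (s : ℕ → α) :
    BddAbove (range s) := by
  by_cases hmax : ∃ m : α, IsMax m
  · obtain ⟨m, hm⟩ := hmax
    exact ⟨m, forall_mem_range.2 fun n => hm.isTop (s n)⟩
  · have : NoMaxOrder α := ⟨fun a => not_isMax_iff.1 fun ha => hmax ⟨a, ha⟩⟩
    obtain ⟨f, hf, hsf⟩ := exists_strictMono_forall_le s
    exact (h f hf).range_mono f hsf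

theorem countableInterFilter_atTop_of_bddAbove_range [Nonempty α]
    (h : ∀ s : ℕ → α, BddAbove (range s)) : CountableInterFilter (atTop : Filter α) := by
  refine ⟨fun S hS hmem => ?_⟩
  obtain rfl | hne := S.eq_empty_or_nonempty
  · exact sInter_empty ▸ univ_mem
  obtain ⟨U, rfl⟩ := hS.exists_eq_range hne
  choose s hs using fun n => mem_atTop_sets.1 (hmem (U n) (mem_range_self n))
  obtain ⟨t, ht⟩ := h s
  refine mem_atTop_sets.2 ⟨t, fun a hta => mem_sInter.2 <| forall_mem_range.2 fun n => ?_⟩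
  exact hs n a ((ht (mem_range_self n)).trans hta)

end CountablyDirected

theorem eventually_mem_of_tendsto_of_isGδ {ι X : Type*} [TopologicalSpace X] {l : Filter ι}
    [CountableInterFilter l] {f : ι → X} {x : X} {G : Set X} (hf : Tendsto f l (𝓝 x))
    (hG : IsGδ G) (hx : x ∈ G) : ∀ᶠ i in l, f i ∈ G := by
  obtain ⟨U, hU, rfl⟩ := hG.eq_iInter_nat
  simp only [mem_iInter] at hx ⊢
  exact eventually_countable_forall.2 fun n => hf.eventually_mem ((hU n).mem_nhds (hx n))

namespace RetractionalSkeleton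

attribute [instance] po ne

variable {K : Type u} [TopologicalSpace K] (𝔰 : RetractionalSkeleton K)

instance : IsDirectedOrder 𝔰.Γ := ⟨𝔰.directed⟩

instance : CountableInterFilter (atTop : Filter 𝔰.Γ) :=
  countableInterFilter_atTop_of_bddAbove_range <| bddAbove_range_of_forall_strictMono fun f hf =>
    let ⟨t, ht, _⟩ := 𝔰.sup_seq f hf
    ⟨t, ht.1⟩

theorem r_mem_inducedSet (s : 𝔰.Γ) (x : K) : 𝔰.r s x ∈ 𝔰.inducedSet :=
  mem_iUnion.2 ⟨s, mem_range_self x⟩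

theorem subset_closure_inter_inducedSet {G : Set K} (hG : IsGδ G) :
    G ⊆ closure (G ∩ 𝔰.inducedSet) := by
  intro x hx
  have hrG : ∀ᶠ s in atTop, 𝔰.r s x ∈ G :=
    eventually_mem_of_tendsto_of_isGδ (𝔰.tendsto_id x) hG hx
  exact mem_closure_of_tendsto (𝔰.tendsto_id x) <|
    hrG.mono fun s hs => ⟨hs, 𝔰.r_mem_inducedSet s x⟩

end RetractionalSkeleton

theorem inducedByRSkeleton_dense_in_Gdelta_general {K : Type u} [TopologicalSpace K] {D : Set K}
    (hD : IsInducedByRSkeleton D) :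
    (∀ G : Set K, IsGδ G → G ⊆ closure (G ∩ D)) ∧
      (∀ x : K, IsGδ ({x} : Set K) → x ∈ D) := by
  obtain ⟨𝔰, rfl⟩ := hD
  refine ⟨fun G hG => 𝔰.subset_closure_inter_inducedSet hG, fun x hx => ?_⟩
  have hclosure : x ∈ closure ({x} ∩ 𝔰.inducedSet) :=
    𝔰.subset_closure_inter_inducedSet hx (mem_singleton x)
  exact singleton_inter_nonempty.1 (closure_nonempty_iff.1 ⟨x, hclosure⟩)

/-- If `D` is induced by an r-skeleton in a compact Hausdorff space `K`, then `G ∩ D` is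
dense in `G` for every Gδ set `G ⊆ K`; in particular every Gδ point of `K` lies in `D`. -/
theorem inducedByRSkeleton_dense_in_Gdelta (K : Type u) [TopologicalSpace K] [CompactSpace K]
    [T2Space K] (D : Set K) (hD : IsInducedByRSkeleton D) :
    (∀ G : Set K, IsGδ G → G ⊆ closure (G ∩ D)) ∧
      (∀ x : K, IsGδ ({x} : Set K) → x ∈ D) := by
  exact inducedByRSkeleton_dense_in_Gdelta_general hD
end

section
/- Let K be a compact Hausdorff space whose set of Gδ points is dense in K. Then there is at most one subset of K which is induced by an r-skeleton in K; that is, if A and B are both induced by r-skeletons in K, then A = B. -/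
/-!
Let `D` be the set induced by an r-skeleton. The points of `D` are those fixed by some `r s`, and
countably many indices have a common upper bound. Hence every Gδ point lies in `D`, and `D` contains
the closure of each of its countable subsets.

Moreover `D` is countably tight. If `x ∈ D` lies in the closure of `C ⊆ D`, there are
`s 0 ≤ s 1 ≤ ⋯` and countable sets `c n ⊆ C` such that `r (s n)` maps `c n` onto a dense subset of
`r (s n) [C]` and `c n ⊆ r (s (n + 1)) [K]`. With `t = sup s n`, the closure `E` of `⋃ n, c n` is a
compact subset of `r t [K]` whose image under each `r (s n)` contains `r (s n) x`. As
`r t = lim r (s n)`, a cluster point of preimages in `E` of the points `r (s n) x` equals `x`.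

So if `A ∩ B` is dense, a point of `A` is in the closure of a countable subset of `A ∩ B`, and that
closure is contained in `B`.
-/

open Filter Topology TopologicalSpace Set

universe u v

section

variable {X Y : Type*}

lemma exists_countable_subset_image_subset_closure [TopologicalSpace Y] (f : X → Y) (C : Set X)
    [SeparableSpace ↥(f '' C)] :
    ∃ C₀ ⊆ C, C₀.Countable ∧ f '' C ⊆ closure (f '' C₀) := by
  obtain ⟨T, hT, hTdense⟩ := exists_countable_dense ↥(f '' C)
  obtain ⟨C₀, hC₀, hinj, himage⟩ :=
    SurjOn.exists_subset_injOn_image_eq (Subtype.coe_image_subset (f '' C) T)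
  refine ⟨C₀, hC₀, countable_of_injective_of_countable_image hinj ?_, ?_⟩
  · rw [himage]
    exact hT.image _
  · rw [himage]
    exact Subtype.dense_iff.mp hTdense

lemma exists_strictMono_comp_of_monotone_of_not_le [Preorder X] {f : ℕ → X} (hf : Monotone f)
    (hnbdd : ∀ N, ∃ n, ¬ f n ≤ f N) {u : ℕ → ℕ} (hu : Tendsto u atTop atTop) :
    ∃ v : ℕ → ℕ, StrictMono (f ∘ u ∘ v) := by
  have hlt : ∀ k, ∃ m, f (u k) < f (u m) := fun k => by
    obtain ⟨n, hn⟩ := hnbdd (u k)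
    obtain ⟨m, hnm⟩ := (hu.eventually_ge_atTop n).exists
    have hkn : u k ≤ n := le_of_not_ge fun hle => hn (hf hle)
    exact ⟨m, ((hf hkn).lt_of_not_ge hn).trans_le (hf hnm)⟩
  choose next hnext using hlt
  refine ⟨fun n => next^[n] 0, strictMono_nat_of_lt_succ fun n => ?_⟩
  simpa only [Function.comp_apply, Function.iterate_succ_apply'] using hnext (next^[n] 0)

end

namespace RetractionalSkeleton

variable {K : Type u} [TopologicalSpace K] (𝔰 : RetractionalSkeleton K)

attribute [local instance] RetractionalSkeleton.po RetractionalSkeleton.ne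

lemma mem_range_iff {s : 𝔰.Γ} {x : K} : x ∈ range (𝔰.r s) ↔ 𝔰.r s x = x :=
  ⟨by rintro ⟨y, rfl⟩; exact 𝔰.isRetraction s y, fun hx => ⟨x, hx⟩⟩

lemma monotone_range : Monotone fun s => range (𝔰.r s) := by
  rintro s t hst _ ⟨y, rfl⟩
  exact ⟨𝔰.r s y, (𝔰.comp_eq_of_le s t hst y).2⟩

lemma range_subset_inducedSet (s : 𝔰.Γ) : range (𝔰.r s) ⊆ 𝔰.inducedSet :=
  subset_iUnion (fun s => range (𝔰.r s)) s

lemma isClosed_range [T2Space K] (s : 𝔰.Γ) : IsClosed (range (𝔰.r s)) := by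
  have hrange : range (𝔰.r s) = {x | 𝔰.r s x = x} := Set.ext fun _ => 𝔰.mem_range_iff
  rw [hrange]
  exact isClosed_eq (𝔰.r s).continuous continuous_id

lemma isCompact_range [CountablyCompactSpace K] (s : 𝔰.Γ) : IsCompact (range (𝔰.r s)) := by
  have := 𝔰.metrizable s
  have hrange : IsCountablyCompact (range (𝔰.r s)) := by
    rw [← image_univ]
    exact isClosed_univ.isCountablyCompact.image (𝔰.r s).continuous
  have := isCountablyCompact_iff_countablyCompactSpace.mp hrange
  rw [isCompact_iff_compactSpace, compactSpace_iff_seqCompactSpace]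
  infer_instance

lemma secondCountableTopology_range [CountablyCompactSpace K] (s : 𝔰.Γ) :
    SecondCountableTopology (range (𝔰.r s)) := by
  have := 𝔰.metrizable s
  have := isCompact_iff_compactSpace.mp (𝔰.isCompact_range s)
  let := metrizableSpaceMetric (range (𝔰.r s))
  infer_instance

lemma exists_countable_image_subset_closure [CountablyCompactSpace K] (s : 𝔰.Γ) (C : Set K) :
    ∃ C₀ ⊆ C, C₀.Countable ∧ 𝔰.r s '' C ⊆ closure (𝔰.r s '' C₀) := by
  have := 𝔰.secondCountableTopology_range s
  have : SecondCountableTopology ↥(𝔰.r s '' C) :=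
    (IsEmbedding.inclusion (image_subset_range (𝔰.r s) C)).secondCountableTopology
  exact exists_countable_subset_image_subset_closure (𝔰.r s) C

lemma exists_isLUB_tendsto_of_monotone {f : ℕ → 𝔰.Γ} (hf : Monotone f) :
    ∃ t, IsLUB (range f) t ∧ ∀ x, Tendsto (fun n => 𝔰.r (f n) x) atTop (𝓝 (𝔰.r t x)) := by
  by_cases hbdd : ∃ N, ∀ n, f n ≤ f N
  · obtain ⟨N, hN⟩ := hbdd
    have hconst : ∀ n ≥ N, f n = f N := fun n hn => (hN n).antisymm (hf hn)
    refine ⟨f N, ⟨forall_mem_range.mpr hN, fun _ ht => ht (mem_range_self N)⟩, fun x => ?_⟩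
    exact tendsto_atTop_of_eventually_const fun n hn => by rw [hconst n hn]
  · push Not at hbdd
    -- The strictly increasing subsequences of `f` all have the supremum of `f`.
    have hsubseq : ∀ φ : ℕ → ℕ, StrictMono (f ∘ φ) → ∃ t, IsLUB (range f) t ∧
        ∀ x, Tendsto (fun n => 𝔰.r (f (φ n)) x) atTop (𝓝 (𝔰.r t x)) := fun φ hfφ => by
      have hφ : StrictMono φ := fun _ _ hlt => hf.reflect_lt (hfφ hlt)
      obtain ⟨t, ht, hlim⟩ := 𝔰.sup_seq (f ∘ φ) hfφ
      rw [isLUB_congr (hf.upperBounds_range_comp_tendsto_atTop hφ.tendsto_atTop)] at ht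
      exact ⟨t, ht, hlim⟩
    obtain ⟨φ, hφ⟩ := exists_strictMono_comp_of_monotone_of_not_le hf hbdd Filter.tendsto_id
    obtain ⟨t, ht, -⟩ := hsubseq _ hφ
    refine ⟨t, ht, fun x => tendsto_of_subseq_tendsto fun u hu => ?_⟩
    obtain ⟨v, hv⟩ := exists_strictMono_comp_of_monotone_of_not_le hf hbdd hu
    obtain ⟨t', ht', hlim⟩ := hsubseq _ hv
    exact ⟨v, ht.unique ht' ▸ hlim x⟩

lemma exists_forall_le (f : ℕ → 𝔰.Γ) : ∃ t, ∀ n, f n ≤ t := by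
  choose sup le_sup_left le_sup_right using 𝔰.directed
  let g : ℕ → 𝔰.Γ := fun n => Nat.rec (f 0) (fun k s => sup s (f (k + 1))) n
  have hg : Monotone g := monotone_nat_of_le_succ fun n => le_sup_left (g n) (f (n + 1))
  have hfg : ∀ n, f n ≤ g n
    | 0 => le_rfl
    | n + 1 => le_sup_right (g n) (f (n + 1))
  obtain ⟨t, ht, -⟩ := 𝔰.exists_isLUB_tendsto_of_monotone hg
  exact ⟨t, fun n => (hfg n).trans (ht.1 (mem_range_self n))⟩

lemma mem_inducedSet_of_isGδ {x : K} (hx : IsGδ ({x} : Set K)) : x ∈ 𝔰.inducedSet := by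
  have : IsDirectedOrder 𝔰.Γ := ⟨𝔰.directed⟩
  obtain ⟨U, hU, hxU⟩ := isGδ_iff_eq_iInter_nat.mp hx
  have hmem : ∀ n, x ∈ U n := mem_iInter.mp (hxU ▸ mem_singleton x)
  have hlarge : ∀ n, ∃ s, ∀ t ≥ s, 𝔰.r t x ∈ U n := fun n =>
    eventually_atTop.mp ((𝔰.tendsto_id x).eventually ((hU n).mem_nhds (hmem n)))
  choose s hs using hlarge
  obtain ⟨t, ht⟩ := 𝔰.exists_forall_le s
  have hfix : 𝔰.r t x ∈ ({x} : Set K) := by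
    rw [hxU]
    exact mem_iInter.mpr fun n => hs n t (ht n)
  exact 𝔰.range_subset_inducedSet t ⟨x, hfix⟩

lemma exists_ge_subset_range (s : 𝔰.Γ) {C : Set K} (hC : C.Countable)
    (hCD : C ⊆ 𝔰.inducedSet) : ∃ t ≥ s, C ⊆ range (𝔰.r t) := by
  rcases C.eq_empty_or_nonempty with rfl | hne
  · exact ⟨s, le_rfl, empty_subset _⟩
  obtain ⟨c, rfl⟩ := hC.exists_eq_range hne
  choose a ha using fun n => mem_iUnion.mp (hCD (mem_range_self n))
  obtain ⟨t, ht⟩ := 𝔰.exists_forall_le a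
  obtain ⟨w, hsw, htw⟩ := 𝔰.directed s t
  exact ⟨w, hsw, range_subset_iff.mpr fun n => 𝔰.monotone_range ((ht n).trans htw) (ha n)⟩

lemma closure_subset_inducedSet [T2Space K] {C : Set K} (hC : C.Countable)
    (hCD : C ⊆ 𝔰.inducedSet) : closure C ⊆ 𝔰.inducedSet := by
  obtain ⟨s⟩ := 𝔰.ne
  obtain ⟨t, -, ht⟩ := 𝔰.exists_ge_subset_range s hC hCD
  exact (closure_minimal ht (𝔰.isClosed_range t)).trans (𝔰.range_subset_inducedSet t)

lemma apply_mem_of_forall_apply_mem_image [T2Space K] {f : ℕ → 𝔰.Γ} (hf : Monotone f) {t : 𝔰.Γ}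
    (hlim : ∀ y, Tendsto (fun n => 𝔰.r (f n) y) atTop (𝓝 (𝔰.r t y)))
    {E : Set K} (hE : IsCountablyCompact E) (hEt : E ⊆ range (𝔰.r t)) {x : K}
    (hx : ∀ n, 𝔰.r (f n) x ∈ 𝔰.r (f n) '' E) : 𝔰.r t x ∈ E := by
  choose z hzE hz using hx
  obtain ⟨y, hyE, hy⟩ := hE.seq_clusterPt z (.of_forall hzE)
  have hzx : ∀ m, ∀ n ≥ m, 𝔰.r (f m) (z n) = 𝔰.r (f m) x := fun m n hmn => by
    rw [← (𝔰.comp_eq_of_le _ _ (hf hmn) (z n)).1, hz n, (𝔰.comp_eq_of_le _ _ (hf hmn) x).1]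
  have hyx : ∀ m, 𝔰.r (f m) y = 𝔰.r (f m) x := fun m =>
    (isClosed_eq (𝔰.r (f m)).continuous continuous_const).mem_of_mapClusterPt hy
      ((eventually_ge_atTop m).mono (hzx m))
  have hty : 𝔰.r t y = 𝔰.r t x := tendsto_nhds_unique (hlim y) (by simpa only [hyx] using hlim x)
  rwa [← hty, 𝔰.mem_range_iff.mp (hEt hyE)]

lemma exists_countable_mem_closure [CountablyCompactSpace K] [T2Space K] {C : Set K}
    (hC : C ⊆ 𝔰.inducedSet) {x : K} (hx : x ∈ 𝔰.inducedSet) (hxC : x ∈ closure C) :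
    ∃ C₀ ⊆ C, C₀.Countable ∧ x ∈ closure C₀ := by
  obtain ⟨s₀, hs₀⟩ := mem_iUnion.mp hx
  choose c hcC hc hcdense using fun s => 𝔰.exists_countable_image_subset_closure s C
  choose next hnext hcnext using fun s =>
    𝔰.exists_ge_subset_range s (hc s) ((hcC s).trans hC)
  let f : ℕ → 𝔰.Γ := fun n => Nat.rec s₀ (fun _ s => next s) n
  have hf : Monotone f := monotone_nat_of_le_succ fun n => hnext (f n)
  obtain ⟨t, ht, hlim⟩ := 𝔰.exists_isLUB_tendsto_of_monotone hf
  have hft : ∀ n, f n ≤ t := fun n => ht.1 (mem_range_self n)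
  refine ⟨⋃ n, c (f n), iUnion_subset fun n => hcC _, countable_iUnion fun n => hc _, ?_⟩
  set E := closure (⋃ n, c (f n))
  have hEt : E ⊆ range (𝔰.r t) := closure_minimal
    (iUnion_subset fun n => (hcnext (f n)).trans (𝔰.monotone_range (hft (n + 1))))
    (𝔰.isClosed_range t)
  have hE : IsCompact E := (𝔰.isCompact_range t).of_isClosed_subset isClosed_closure hEt
  have himage : ∀ n, 𝔰.r (f n) '' closure C ⊆ 𝔰.r (f n) '' E := fun n => calc
    𝔰.r (f n) '' closure C ⊆ closure (𝔰.r (f n) '' C) :=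
      image_closure_subset_closure_image (𝔰.r (f n)).continuous
    _ ⊆ closure (𝔰.r (f n) '' c (f n)) := closure_minimal (hcdense (f n)) isClosed_closure
    _ ⊆ 𝔰.r (f n) '' E := closure_minimal
      (image_mono ((subset_iUnion (fun n => c (f n)) n).trans subset_closure))
      (hE.image (𝔰.r (f n)).continuous).isClosed
  have hxt : 𝔰.r t x = x := 𝔰.mem_range_iff.mp (𝔰.monotone_range (hft 0) hs₀)
  rw [← hxt]
  exact 𝔰.apply_mem_of_forall_apply_mem_image hf hlim hE.isCountablyCompact hEt
    fun n => himage n (mem_image_of_mem _ hxC)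

lemma inducedSet_subset_of_subset_closure_inter [CountablyCompactSpace K] [T2Space K]
    {𝔱 : RetractionalSkeleton K}
    (h : 𝔰.inducedSet ⊆ closure (𝔰.inducedSet ∩ 𝔱.inducedSet)) :
    𝔰.inducedSet ⊆ 𝔱.inducedSet := fun _ hx => by
  obtain ⟨C, hC, hcountable, hxC⟩ := 𝔰.exists_countable_mem_closure inter_subset_left hx (h hx)
  exact 𝔱.closure_subset_inducedSet hcountable (hC.trans inter_subset_right) hxC

end RetractionalSkeleton

theorem IsInducedByRSkeleton.eq_of_dense_inter {K : Type u} [TopologicalSpace K]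
    [CountablyCompactSpace K] [T2Space K] {A B : Set K} (hA : IsInducedByRSkeleton A)
    (hB : IsInducedByRSkeleton B) (hAB : Dense (A ∩ B)) : A = B := by
  obtain ⟨𝔰, rfl⟩ := hA
  obtain ⟨𝔱, rfl⟩ := hB
  have hBA : Dense (𝔱.inducedSet ∩ 𝔰.inducedSet) := by rwa [inter_comm]
  exact (𝔰.inducedSet_subset_of_subset_closure_inter fun x _ => hAB x).antisymm
    (𝔱.inducedSet_subset_of_subset_closure_inter fun x _ => hBA x)

theorem IsInducedByRSkeleton.mem_of_isGδ {K : Type u} [TopologicalSpace K] {D : Set K}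
    (hD : IsInducedByRSkeleton D) {x : K} (hx : IsGδ ({x} : Set K)) : x ∈ D := by
  obtain ⟨𝔰, rfl⟩ := hD
  exact 𝔰.mem_inducedSet_of_isGδ hx

theorem inducedByRSkeleton_unique_of_dense_Gdelta_points_general (K : Type u) [TopologicalSpace K]
    [CountablyCompactSpace K] [T2Space K] (hdense : Dense {x : K | IsGδ ({x} : Set K)})
    (A B : Set K) (hA : IsInducedByRSkeleton A) (hB : IsInducedByRSkeleton B) :
    A = B :=
  hA.eq_of_dense_inter hB (hdense.mono fun _ hx => ⟨hA.mem_of_isGδ hx, hB.mem_of_isGδ hx⟩)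

/-- If a compact Hausdorff space `K` has a dense set of Gδ points, then at most one subset
of `K` is induced by an r-skeleton in `K`. -/
theorem inducedByRSkeleton_unique_of_dense_Gdelta_points (K : Type u) [TopologicalSpace K]
    [CompactSpace K] [T2Space K] (hdense : Dense {x : K | IsGδ ({x} : Set K)})
    (A B : Set K) (hA : IsInducedByRSkeleton A) (hB : IsInducedByRSkeleton B) :
    A = B := by
  exact inducedByRSkeleton_unique_of_dense_Gdelta_points_general K hdense A B hA hB
end
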